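/- For a real number w and a natural number t, define r_t^w(x) = (-x)_t (x+w)_t / t!. Then for every integer M \ge 1 and all real numbers x and w: \sum_{j=0}^{M} (x)_j \binom{x+w+M-1}{j} \, r^{w}_{M-j}(x) = 0. (This is the identity \sum_{j=0}^{m+k} s^{n+k-l}_j(x) \, r_{m+k-j}^{u+n-1-l}(x) = 0, with s_j^{u,m,n}(x) = (x)_j \binom{x+u+n+m-2}{j}, valid for l \ge 0, k \in \mathbb{Z} and m \ge \max\{0, -k+1\}, after the substitutions M = m+k and w = u+n-1-l.) -/

import Mathlib

/-- The generalized binomial coefficient `y choose l = y(y-1)⋯(y-l+1)/l!`. -/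
noncomputable def gbinom (y : ℝ) (l : ℕ) : ℝ :=
  (∏ k ∈ Finset.range l, (y - k)) / l.factorial

/-- The Pochhammer symbol `(y)_l = y (y+1) ⋯ (y+l-1)`. -/
noncomputable def poch (y : ℝ) (l : ℕ) : ℝ := ∏ k ∈ Finset.range l, (y + k)

/-- The polynomial `r_t^w(x) = (-x)_t (x+w)_t / t!`. -/
noncomputable def rpol (w : ℝ) (t : ℕ) (x : ℝ) : ℝ :=
  poch (-x) t * poch (x + w) t / t.factorial

/-!
Since `(y)_l / l!` is the multiset coefficient of `y` and `l`, and since the factors of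
`C(z+M-1, j)` continue those of `(z)_{M-j}` up to `(z)_M`, taking `z = x + w` turns the sum into
`(x+w)_M` times the Chu–Vandermonde convolution of `(x)_j / j!` and `(-x)_{M-j} / (M-j)!`. The
latter is `(x + (-x))_M / M!`, which vanishes for `M ≥ 1`.
-/

open Finset.HasAntidiagonal (antidiagonal mem_antidiagonal)

lemma multichoose_eq_negOnePow_smul_choose_neg {R : Type*} [NonAssocRing R] [Pow R ℕ]
    [NatPowAssoc R] [BinomialRing R] (r : R) (n : ℕ) :
    Ring.multichoose r n = Int.negOnePow n • Ring.choose (-r) n := by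
  rw [Ring.choose_neg', smul_smul, Int.units_mul_self, one_smul]

lemma add_multichoose_eq {R : Type*} [Ring R] [BinomialRing R] {r s : R} (k : ℕ)
    (h : Commute r s) :
    Ring.multichoose (r + s) k =
      ∑ ij ∈ antidiagonal k, Ring.multichoose r ij.1 * Ring.multichoose s ij.2 := by
  simp only [multichoose_eq_negOnePow_smul_choose_neg, neg_add,
    Ring.add_choose_eq k h.neg_left.neg_right, Finset.smul_sum]
  refine Finset.sum_congr rfl fun ij hij => ?_
  rw [smul_mul_smul_comm, ← Int.negOnePow_add, ← Nat.cast_add, mem_antidiagonal.mp hij]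

lemma poch_eq_ascPochhammer_eval (y : ℝ) (l : ℕ) : poch y l = (ascPochhammer ℝ l).eval y := by
  induction l with
  | zero => simp [poch]
  | succ l ih => rw [ascPochhammer_succ_eval, ← ih, poch, poch, Finset.prod_range_succ]

lemma poch_div_factorial_eq_multichoose (y : ℝ) (l : ℕ) :
    poch y l / l.factorial = Ring.multichoose y l := by
  rw [div_eq_iff (by positivity), mul_comm, ← nsmul_eq_mul,
    Ring.factorial_nsmul_multichoose_eq_ascPochhammer, Polynomial.ascPochhammer_smeval_eq_eval,
    ← poch_eq_ascPochhammer_eval]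

lemma poch_add (y : ℝ) (m n : ℕ) : poch y (m + n) = poch y m * poch (y + m) n := by
  simp only [poch, Finset.prod_range_add, Nat.cast_add, add_assoc]

lemma gbinom_add_sub_one (y : ℝ) (l : ℕ) : gbinom (y + l - 1) l = poch y l / l.factorial := by
  rw [gbinom, poch, ← Finset.prod_range_reflect]
  congr 1
  refine Finset.prod_congr rfl fun k hk => ?_
  have hkl : k + 1 ≤ l := Finset.mem_range.mp hk
  rw [Nat.sub_sub, add_comm 1 k, Nat.cast_sub hkl, Nat.cast_add_one]
  ring

lemma gbinom_mul_poch (z : ℝ) (j t : ℕ) :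
    gbinom (z + (j + t : ℕ) - 1) j * poch z t = poch z (j + t) / j.factorial := by
  have shift : z + (j + t : ℕ) - 1 = z + t + j - 1 := by push_cast; ring
  rw [shift, gbinom_add_sub_one, add_comm j t, poch_add]
  ring

lemma poch_mul_gbinom_mul_rpol (x w : ℝ) (j t : ℕ) :
    poch x j * gbinom (x + w + (j + t : ℕ) - 1) j * rpol w t x =
      poch (x + w) (j + t) * (Ring.multichoose x j * Ring.multichoose (-x) t) := by
  calc
    _ = poch x j * (gbinom (x + w + (j + t : ℕ) - 1) j * poch (x + w) t) *
        (poch (-x) t / t.factorial) := by rw [rpol]; ring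
    _ = poch (x + w) (j + t) * (poch x j / j.factorial * (poch (-x) t / t.factorial)) := by
      rw [gbinom_mul_poch]; ring
    _ = _ := by simp only [poch_div_factorial_eq_multichoose]

/-- the identity
`∑_{j=0}^{M} (x)_j C(x+w+M-1, j) r^w_{M-j}(x) = 0` for `M ≥ 1`. -/
theorem sum_s_r_eq_zero (M : ℕ) (hM : 1 ≤ M) (x w : ℝ) :
    ∑ j ∈ Finset.range (M + 1),
      poch x j * gbinom (x + w + M - 1) j * rpol w (M - j) x = 0 := by
  calc
    _ = ∑ ij ∈ antidiagonal M,
          poch x ij.1 * gbinom (x + w + M - 1) ij.1 * rpol w ij.2 x :=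
      (Finset.Nat.sum_antidiagonal_eq_sum_range_succ
        (fun j t => poch x j * gbinom (x + w + M - 1) j * rpol w t x) M).symm
    _ = poch (x + w) M * Ring.multichoose (x + -x) M := by
      rw [add_multichoose_eq M (Commute.all x (-x)), Finset.mul_sum]
      refine Finset.sum_congr rfl fun ij hij => ?_
      rw [← mem_antidiagonal.mp hij, poch_mul_gbinom_mul_rpol]
    _ = 0 := by
      obtain ⟨n, rfl⟩ := Nat.exists_eq_add_of_le' hM
      rw [add_neg_cancel, Ring.multichoose_zero_succ, mul_zero]
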